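/- arXiv:2602.20606 — 2 statements merged into one kernel-verified Lean document; each statement's English description precedes it below -/
import Mathlib

section
/- Let Y be a Banach space and let (x_n)_{n∈ℕ} be a bounded sequence in Y. Let V : ℕ → (0,∞) be strictly increasing with lim_{N→∞} V(N) = ∞ and lim_{N→∞} ΔV(N)/V(N) = 0. Then for each integer k ≥ 1, lim_{N→∞} ‖𝔼(k+1)^V_{n≤N} x_n − (1/(V(N)·k!)) Σ_{n=1}^N ΔV(n)·(log(V(N)/V(n)))^k·x_n‖ = 0. -/
open Filter Finset MeasureTheory

/-- Discrete derivative: `Δg(n) = g(n) - g(n-1)` for `n ≥ 2`, and `Δg(1) = g(1)`. -/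
noncomputable def dd (g : ℕ → ℝ) (n : ℕ) : ℝ := if n = 1 then g 1 else g n - g (n - 1)

/-- Iterated discrete derivative `Δ^k`. -/
noncomputable def ddIter (f : ℕ → ℝ) : ℕ → ℕ → ℝ
  | 0 => f
  | k + 1 => dd (ddIter f k)

/-- `N`-th `W`-weighted average `𝔼^W_{n ≤ N} x_n`. -/
noncomputable def wavg {Y : Type*} [AddCommGroup Y] [Module ℝ Y]
    (W : ℕ → ℝ) (x : ℕ → Y) (N : ℕ) : Y :=
  (W N)⁻¹ • ∑ n ∈ Finset.Icc 1 N, dd W n • x n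

/-- `W`-weighted average over the interval `[M, N]`. -/
noncomputable def wavgI {Y : Type*} [AddCommGroup Y] [Module ℝ Y]
    (W : ℕ → ℝ) (x : ℕ → Y) (M N : ℕ) : Y :=
  (W N - W M)⁻¹ • ∑ n ∈ Finset.Icc M N, dd W n • x n

/-- Cesàro average over the interval `[M, N]`. -/
noncomputable def cesaroI {Y : Type*} [AddCommGroup Y] [Module ℝ Y]
    (x : ℕ → Y) (M N : ℕ) : Y :=
  ((N : ℝ) - (M : ℝ))⁻¹ • ∑ n ∈ Finset.Icc M N, x n

/-- Iterated `W`-weighted averages: `iterAvg W x k N = 𝔼(k)^W_{n ≤ N} x_n`,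
with the convention `iterAvg W x 0 = x`. -/
noncomputable def iterAvg {Y : Type*} [AddCommGroup Y] [Module ℝ Y]
    (W : ℕ → ℝ) (x : ℕ → Y) : ℕ → ℕ → Y
  | 0, N => x N
  | k + 1, N => (W N)⁻¹ • ∑ n ∈ Finset.Icc 1 N, dd W n • iterAvg W x k n

/-- The uniform `W`-weighted average of `x` equals `L`: `𝔼^W_unif x_n = L`. -/
def unifAvg {Y : Type*} [NormedAddCommGroup Y] [NormedSpace ℝ Y]
    (W : ℕ → ℝ) (x : ℕ → Y) (L : Y) : Prop :=
  ∀ ε > (0 : ℝ), ∃ K > (0 : ℝ), ∀ M N : ℕ, 1 ≤ M → M ≤ N → K ≤ W N - W M →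
    ‖wavgI W x M N - L‖ < ε

/-- `𝔼(∞)^W x_n = L`: `lim_{k → ∞} limsup_{N → ∞} ‖𝔼(k)^W_{n ≤ N}(x_n - L)‖ = 0`. -/
def iterInfty {Y : Type*} [NormedAddCommGroup Y] [NormedSpace ℝ Y]
    (W : ℕ → ℝ) (x : ℕ → Y) (L : Y) : Prop :=
  Tendsto (fun k => Filter.limsup (fun N => ‖iterAvg W (fun n => x n - L) (k + 1) N‖) atTop)
    atTop (nhds 0)

/-- Membership in the class `𝓕₁`. -/
def inF1 (f : ℕ → ℝ) : Prop :=
  Tendsto f atTop atTop ∧ Tendsto (fun n => dd f n) atTop (nhds 0) ∧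
    ∃ n₀ : ℕ, ∀ m n : ℕ, n₀ ≤ m → m ≤ n → dd f n ≤ dd f m

/-- `memF ℓ f` means `f ∈ 𝓕_{ℓ+1}`. -/
def memF : ℕ → (ℕ → ℝ) → Prop
  | 0, f => inF1 f
  | ℓ + 1, f => memF ℓ (dd f)

/-- Integer powers `T^m` of an invertible map `T` with inverse `e`. -/
def zpowIter {X : Type*} (T e : X → X) (m : ℤ) : X → X :=
  if 0 ≤ m then T^[m.toNat] else e^[(-m).toNat]

/-- `p(Δ)f(n)` for an integer polynomial `p`. -/
noncomputable def polyDD (p : Polynomial ℤ) (f : ℕ → ℝ) (n : ℕ) : ℝ :=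
  ∑ j ∈ Finset.range (p.natDegree + 1), (p.coeff j : ℝ) * ddIter f j n

/-- `E ⊆ ℕ = {1, 2, ...}` has positive upper Banach density. -/
def posUBD (E : Set ℕ) : Prop :=
  ∃ δ : ℝ, 0 < δ ∧ ∃ M N : ℕ → ℕ, (∀ j, 1 ≤ M j ∧ M j ≤ N j) ∧
    Tendsto (fun j => N j - M j) atTop atTop ∧
    ∀ j, δ * ((N j : ℝ) - (M j : ℝ)) ≤ (Nat.card ↥(E ∩ Set.Icc (M j) (N j)) : ℝ)


lemma aux_pow (k : ℕ) (a d : ℝ) (ha : 0 ≤ a) (hd : 0 ≤ d) :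
    (a + d) ^ (k + 1) / ((k + 1).factorial : ℝ) - a ^ (k + 1) / ((k + 1).factorial : ℝ)
      ≤ d * ((a + d) ^ k / (k.factorial : ℝ)) := by
  induction k with
  | zero => simp
  | succ k ih =>
    have h0 : (0 : ℝ) < (k.factorial : ℝ) := by positivity
    rw [Nat.factorial_succ (k + 1)]
    rw [Nat.factorial_succ k] at ih ⊢
    push_cast at ih ⊢
    have hk : (0 : ℝ) < (k : ℝ) + 1 := by positivity
    have ih' : (a + d) ^ (k + 1) - a ^ (k + 1) ≤ ((k : ℝ) + 1) * d * (a + d) ^ k := by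
      have := mul_le_mul_of_nonneg_left ih (mul_pos hk h0).le
      field_simp at this
      linarith
    have e : (a + d) ^ (k + 2) - a ^ (k + 2) ≤ ((k : ℝ) + 2) * d * (a + d) ^ (k + 1) := by
      have h1 : a * ((a + d) ^ (k + 1) - a ^ (k + 1)) ≤ a * (((k : ℝ) + 1) * d * (a + d) ^ k) :=
        mul_le_mul_of_nonneg_left ih' ha
      have h2 : 0 ≤ d * (((k : ℝ) + 1) * d * (a + d) ^ k) := by positivity
      have e1 : (a + d) ^ (k + 2) - a ^ (k + 2)
        = a * ((a + d) ^ (k + 1) - a ^ (k + 1)) + d * (a + d) ^ (k + 1) := by ring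
      have e2 : ((k : ℝ) + 2) * d * (a + d) ^ (k + 1) =
        a * (((k : ℝ) + 1) * d * (a + d) ^ k) + d * (((k : ℝ) + 1) * d * (a + d) ^ k)
          + d * (a + d) ^ (k + 1) := by ring
      linarith
    rw [← sub_div, ← mul_div_assoc, div_le_div_iff₀ (by positivity) (by positivity)]
    have := mul_le_mul_of_nonneg_right e (mul_pos hk h0).le
    have e3 : k + 1 + 1 = k + 2 := rfl
    rw [e3]
    nlinarith [this]

lemma aux_pow_lower (k : ℕ) (a d : ℝ) (ha : 0 ≤ a) (hd : 0 ≤ d) :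
    d * (a ^ k / (k.factorial : ℝ)) ≤
    (a + d) ^ (k + 1) / ((k + 1).factorial : ℝ) - a ^ (k + 1) / ((k + 1).factorial : ℝ) := by
  have h0 : (0 : ℝ) < (k.factorial : ℝ) := by positivity
  have h : ((k : ℝ) + 1) * d * a ^ k ≤ (a + d) ^ (k + 1) - a ^ (k + 1) := by
    induction k with
    | zero => simp
    | succ k ih =>
      have ih' := mul_le_mul_of_nonneg_left (ih (by positivity)) ha
      have h3 : d * a ^ (k + 1) ≤ d * (a + d) ^ (k + 1) := by gcongr; linarith
      push_cast
      have e1 : (a + d) ^ (k + 1 + 1) - a ^ (k + 1 + 1)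
        = a * ((a + d) ^ (k + 1) - a ^ (k + 1)) + d * (a + d) ^ (k + 1) := by ring
      have e2 : ((k : ℝ) + 1 + 1) * d * a ^ (k + 1) =
        a * (((k : ℝ) + 1) * d * a ^ k) + d * a ^ (k + 1) := by ring
      linarith
  rw [← sub_div, ← mul_div_assoc, div_le_div_iff₀ (by positivity) (by positivity)]
  rw [Nat.factorial_succ k]
  push_cast
  nlinarith [mul_le_mul_of_nonneg_right h h0.le]

lemma aux_exp (j : ℕ) (b : ℝ) (hb : 0 ≤ b) :
    b ^ j / (j.factorial : ℝ) ≤ 2 ^ j * Real.exp (b / 2) := by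
  have h := Real.pow_div_factorial_le_exp (b / 2) (by positivity) j
  rw [div_pow, div_div] at h
  have : b ^ j / (j.factorial : ℝ) = 2 ^ j * (b ^ j / (2 ^ j * (j.factorial : ℝ))) := by
    field_simp
  rw [this]
  gcongr

lemma aux_bracket (k : ℕ) (a d r : ℝ) (ha : 0 ≤ a) (hd : 0 ≤ d) (hr : 0 ≤ r)
    (hdr : d ≤ 2 * r) (hrd : r ≤ d) (hdr2 : d - r ≤ d ^ 2) :
    |((a + d) ^ (k + 1) / ((k + 1).factorial : ℝ) - a ^ (k + 1) / ((k + 1).factorial : ℝ))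
      - r * ((a + d) ^ k / (k.factorial : ℝ))| ≤ 8 * 2 ^ k * r ^ 2 * Real.exp ((a + d) / 2) := by
  have h1 := aux_pow k a d ha hd
  have h2 := aux_pow_lower k a d ha hd
  have h3 := aux_exp k (a + d) (by positivity)
  have h3' : 0 ≤ (a + d) ^ k / (k.factorial : ℝ) := by positivity
  have hE := Real.exp_pos ((a + d) / 2)
  have h4 : (a + d) ^ k / (k.factorial : ℝ) - a ^ k / (k.factorial : ℝ)
      ≤ d * (2 ^ k * Real.exp ((a + d) / 2)) := by
    cases k with
    | zero => simp; positivity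
    | succ k =>
      refine (aux_pow k a d ha hd).trans ?_
      gcongr
      refine (aux_exp k (a + d) (by positivity)).trans ?_
      gcongr <;> norm_num
  have h5 : (d - r) * ((a + d) ^ k / (k.factorial : ℝ))
      ≤ d ^ 2 * (2 ^ k * Real.exp ((a + d) / 2)) := by
    gcongr
  have h6 : d * ((a + d) ^ k / (k.factorial : ℝ) - a ^ k / (k.factorial : ℝ))
      ≤ d * (d * (2 ^ k * Real.exp ((a + d) / 2))) := by gcongr
  have h7 : d ^ 2 * (2 ^ k * Real.exp ((a + d) / 2))
      ≤ (2 * r) ^ 2 * (2 ^ k * Real.exp ((a + d) / 2)) := by gcongr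
  have h8 : 0 ≤ r ^ 2 * (2 ^ k * Real.exp ((a + d) / 2)) := by positivity
  rw [abs_le]
  constructor <;> nlinarith

/-- facts on `δ = log (p / q)` versus `r = (p - q) / p` -/
lemma aux_delta (p q r : ℝ) (hq : 0 < q) (hqp : q ≤ p) (hr : r = (p - q) / p) (hr2 : r ≤ 1 / 2) :
    0 ≤ Real.log (p / q) ∧ 0 ≤ r ∧ Real.log (p / q) ≤ 2 * r ∧ r ≤ Real.log (p / q) ∧
      Real.log (p / q) - r ≤ Real.log (p / q) ^ 2 := by
  have hp : 0 < p := hq.trans_le hqp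
  have h0 : 0 ≤ Real.log (p / q) := Real.log_nonneg ((one_le_div hq).2 hqp)
  have hr0 : 0 ≤ r := by rw [hr]; exact div_nonneg (by linarith) hp.le
  have e : Real.exp (-Real.log (p / q)) = 1 - r := by
    rw [Real.exp_neg, Real.exp_log (by positivity), hr]; field_simp; ring
  have h1 : Real.log (p / q) ≤ 2 * r := by
    refine (Real.log_le_sub_one_of_pos (by positivity)).trans ?_
    have : p / q = 1 / (1 - r) := by
      rw [hr]
      have : 1 - (p - q) / p = q / p := by field_simp; ring
      rw [this]; field_simp
    rw [this, sub_le_iff_le_add, div_le_iff₀ (by linarith)]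
    nlinarith
  have h2 := Real.add_one_le_exp (-Real.log (p / q))
  have h3 := Real.abs_exp_sub_one_sub_id_le (x := -Real.log (p / q))
    (by rw [abs_neg, abs_of_nonneg h0]; linarith)
  rw [abs_le] at h3
  rw [e] at h2 h3
  refine ⟨h0, hr0, h1, by linarith, ?_⟩
  nlinarith [h3.2]

lemma dd_succ (V : ℕ → ℝ) (N : ℕ) (hN : 1 ≤ N) : dd V (N + 1) = V (N + 1) - V N := by
  unfold dd
  rw [if_neg (by omega)]; simp

lemma aux_sqrt (V : ℕ → ℝ) (hVpos : ∀ n : ℕ, 1 ≤ n → 0 < V n)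
    (hVmono : ∀ m n : ℕ, 1 ≤ m → m < n → V m < V n) (N : ℕ) (hN : 1 ≤ N) :
    ∑ n ∈ Finset.Icc 1 N, dd V n / √(V n) ≤ 2 * √(V N) := by
  induction N, hN using Nat.le_induction with
  | base =>
    simp [dd]
    linarith [Real.sqrt_nonneg (V 1)]
  | succ N hN ih =>
    rw [Finset.sum_Icc_succ_top (by omega), dd_succ V N hN]
    have hp := hVpos N hN
    have hp' := hVpos (N + 1) (by omega)
    have hs := Real.sqrt_pos.2 hp'
    have : (V (N + 1) - V N) / √(V (N + 1)) ≤ 2 * √(V (N + 1)) - 2 * √(V N) := by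
      rw [div_le_iff₀ hs]
      have e1 := Real.mul_self_sqrt hp.le
      have e2 := Real.mul_self_sqrt hp'.le
      nlinarith [sq_nonneg (√(V (N + 1)) - √(V N))]
    linarith

/-- `∑_{n ≤ N} ΔV(n) log(V(N)/V(n))^k / k! x_n` -/
noncomputable def SS {Y : Type*} [AddCommGroup Y] [Module ℝ Y]
    (V : ℕ → ℝ) (x : ℕ → Y) (k N : ℕ) : Y :=
  ∑ n ∈ Finset.Icc 1 N, (dd V n * (Real.log (V N / V n) ^ k / (k.factorial : ℝ))) • x n

lemma dd_pos (V : ℕ → ℝ) (hVpos : ∀ n : ℕ, 1 ≤ n → 0 < V n)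
    (hVmono : ∀ m n : ℕ, 1 ≤ m → m < n → V m < V n) (n : ℕ) (hn : 1 ≤ n) : 0 < dd V n := by
  unfold dd
  split_ifs with h
  · exact hVpos 1 le_rfl
  · linarith [hVmono (n - 1) n (by omega) (by omega)]

lemma SS_step {Y : Type*} [NormedAddCommGroup Y] [NormedSpace ℝ Y]
    (x : ℕ → Y) (C : ℝ) (hx : ∀ n, ‖x n‖ ≤ C)
    (V : ℕ → ℝ)
    (hVpos : ∀ n : ℕ, 1 ≤ n → 0 < V n)
    (hVmono : ∀ m n : ℕ, 1 ≤ m → m < n → V m < V n) (k N : ℕ) (hN : 1 ≤ N)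
    (hr : dd V (N + 1) / V (N + 1) ≤ 1 / 2) :
    ‖SS V x (k + 1) (N + 1) - SS V x (k + 1) N
        - (dd V (N + 1) / V (N + 1)) • SS V x k (N + 1)‖
      ≤ (16 * 2 ^ k + 1) * C * (dd V (N + 1) / V (N + 1)) * dd V (N + 1) := by
  have hC : 0 ≤ C := (norm_nonneg _).trans (hx 0)
  set r := dd V (N + 1) / V (N + 1) with hrdef
  have hp := hVpos N hN
  have hp' := hVpos (N + 1) (by omega)
  have hlt := hVmono N (N + 1) hN (by omega)
  have hdd := dd_pos V hVpos hVmono (N + 1) (by omega)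
  obtain ⟨d0, r0, d1, d2, d3⟩ := aux_delta (V (N + 1)) (V N) r hp hlt.le
    (by rw [hrdef, dd_succ V N hN]) hr
  have key : SS V x (k + 1) (N + 1) - SS V x (k + 1) N - r • SS V x k (N + 1) =
      (∑ n ∈ Finset.Icc 1 N, (dd V n * (
        Real.log (V (N + 1) / V n) ^ (k + 1) / ((k + 1).factorial : ℝ)
        - Real.log (V N / V n) ^ (k + 1) / ((k + 1).factorial : ℝ)
        - r * (Real.log (V (N + 1) / V n) ^ k / (k.factorial : ℝ)))) • x n)
      - (r * dd V (N + 1) * ((0 : ℝ) ^ k / (k.factorial : ℝ))) • x (N + 1) := by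
    unfold SS
    rw [Finset.sum_Icc_succ_top (by omega), Finset.sum_Icc_succ_top (by omega), smul_add,
      Finset.smul_sum, div_self hp'.ne', Real.log_one]
    have : ∀ A B D E F G : Y, F = 0 → A - B - D = G → A + F - B - (D + E) = G - E := by
      intro A B D E F G h1 h2
      rw [h1, ← h2]; abel
    rw [mul_assoc, mul_smul r]
    apply this
    · simp
    · rw [← Finset.sum_sub_distrib, ← Finset.sum_sub_distrib]
      refine Finset.sum_congr rfl fun n _ => ?_
      rw [smul_smul, ← sub_smul, ← sub_smul]
      congr 1; ring
  rw [key]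
  refine (norm_sub_le _ _).trans ?_
  have hlast : ‖(r * dd V (N + 1) * ((0 : ℝ) ^ k / (k.factorial : ℝ))) • x (N + 1)‖
      ≤ r * dd V (N + 1) * C := by
    rw [norm_smul, Real.norm_eq_abs, abs_of_nonneg (by positivity)]
    have : (0 : ℝ) ^ k / (k.factorial : ℝ) ≤ 1 := by
      cases k <;> simp
    have h2 : r * dd V (N + 1) * ((0 : ℝ) ^ k / (k.factorial : ℝ)) ≤ r * dd V (N + 1) :=
      mul_le_of_le_one_right (by positivity) this
    gcongr
    exact hx _
  have hterm : ∀ n ∈ Finset.Icc 1 N, ‖(dd V n * (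
        Real.log (V (N + 1) / V n) ^ (k + 1) / ((k + 1).factorial : ℝ)
        - Real.log (V N / V n) ^ (k + 1) / ((k + 1).factorial : ℝ)
        - r * (Real.log (V (N + 1) / V n) ^ k / (k.factorial : ℝ)))) • x n‖
      ≤ (8 * 2 ^ k * r ^ 2 * √(V (N + 1)) * C) * (dd V n / √(V n)) := by
    intro n hn
    rw [Finset.mem_Icc] at hn
    have hn0 := hVpos n hn.1
    have hdn := dd_pos V hVpos hVmono n hn.1
    have hle : V n ≤ V N := by
      rcases eq_or_lt_of_le hn.2 with h | h
      · rw [h]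
      · exact (hVmono n N hn.1 h).le
    have ea : Real.log (V (N + 1) / V n) = Real.log (V N / V n) + Real.log (V (N + 1) / V N) := by
      rw [← Real.log_mul (by positivity) (by positivity)]
      congr 1; field_simp
    have ha : 0 ≤ Real.log (V N / V n) := Real.log_nonneg ((one_le_div hn0).2 hle)
    have hb := aux_bracket k _ _ r ha d0 r0 d1 d2 d3
    rw [← ea] at hb
    have ee : Real.exp (Real.log (V (N + 1) / V n) / 2) = √(V (N + 1)) / √(V n) := by
      rw [← Real.log_sqrt (by positivity), Real.exp_log (by positivity),
        Real.sqrt_div hp'.le]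
    rw [ee] at hb
    rw [norm_smul, norm_mul, Real.norm_eq_abs, Real.norm_eq_abs, abs_of_pos hdn]
    calc _ ≤ dd V n * (8 * 2 ^ k * r ^ 2 * (√(V (N + 1)) / √(V n))) * C := by
            gcongr; exact hx n
      _ = _ := by ring
  have hsum := norm_sum_le_of_le _ hterm
  rw [← Finset.mul_sum] at hsum
  have hs := aux_sqrt V hVpos hVmono N hN
  have hs' : √(V N) ≤ √(V (N + 1)) := Real.sqrt_le_sqrt hlt.le
  have hfin : (8 * 2 ^ k * r ^ 2 * √(V (N + 1)) * C) * ∑ n ∈ Finset.Icc 1 N, dd V n / √(V n)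
      ≤ 16 * 2 ^ k * C * r * dd V (N + 1) := by
    calc _ ≤ (8 * 2 ^ k * r ^ 2 * √(V (N + 1)) * C) * (2 * √(V (N + 1))) := by
            gcongr; linarith
      _ = 16 * 2 ^ k * C * r * (r * (√(V (N + 1)) * √(V (N + 1)))) := by ring
      _ = _ := by
        rw [Real.mul_self_sqrt hp'.le, hrdef, div_mul_cancel₀ _ hp'.ne']
  linarith

/-- `V(N)` times the difference. -/
noncomputable def UU {Y : Type*} [AddCommGroup Y] [Module ℝ Y]
    (V : ℕ → ℝ) (x : ℕ → Y) (k N : ℕ) : Y :=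
  ∑ n ∈ Finset.Icc 1 N, dd V n • iterAvg V x k n - SS V x k N

lemma UU_littleO {Y : Type*} [NormedAddCommGroup Y] [NormedSpace ℝ Y]
    (x : ℕ → Y) (C : ℝ) (hx : ∀ n, ‖x n‖ ≤ C)
    (V : ℕ → ℝ)
    (hVpos : ∀ n : ℕ, 1 ≤ n → 0 < V n)
    (hVmono : ∀ m n : ℕ, 1 ≤ m → m < n → V m < V n)
    (hVtop : Tendsto V atTop atTop)
    (hV0 : Tendsto (fun N : ℕ => dd V N / V N) atTop (nhds 0)) (k : ℕ) :
    (fun N => UU V x k N) =o[atTop] V := by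
  induction k with
  | zero =>
    have : (fun N => UU V x 0 N) = fun _ => 0 := by
      funext N
      simp [UU, SS, iterAvg]
    rw [this]
    exact Asymptotics.isLittleO_zero _ _
  | succ k ih =>
    have hU0 : UU V x (k + 1) 1 = dd V 1 • iterAvg V x (k + 1) 1 := by
      have h1 := hVpos 1 le_rfl
      simp [UU, SS, div_self h1.ne']
    have hdpos := fun n => dd_pos V hVpos hVmono (n + 1) (by omega)
    -- the difference formula
    have hdiff : ∀ N, 1 ≤ N → UU V x (k + 1) (N + 1) - UU V x (k + 1) N =
        (dd V (N + 1) / V (N + 1)) • UU V x k (N + 1) - 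
        (SS V x (k + 1) (N + 1) - SS V x (k + 1) N
        - (dd V (N + 1) / V (N + 1)) • SS V x k (N + 1)) := by
      intro N hN
      have hi : dd V (N + 1) • iterAvg V x (k + 1) (N + 1) = (dd V (N + 1) / V (N + 1)) •
          ∑ n ∈ Finset.Icc 1 (N + 1), dd V n • iterAvg V x k n := by
        rw [iterAvg, smul_smul, div_eq_mul_inv]
      have e1 : UU V x (k + 1) (N + 1) = ∑ n ∈ Finset.Icc 1 N, dd V n • iterAvg V x (k + 1) n
          + dd V (N + 1) • iterAvg V x (k + 1) (N + 1) - SS V x (k + 1) (N + 1) := by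
        unfold UU
        rw [Finset.sum_Icc_succ_top (by omega)]
      rw [e1, hi]
      unfold UU
      rw [smul_sub]
      abel
    have hshift : Tendsto (fun N : ℕ => N + 1) atTop atTop := tendsto_add_atTop_nat 1
    have hr := hV0.comp hshift
    have hlo : (fun N => UU V x (k + 1) (N + 1) - UU V x (k + 1) N) =o[atTop]
        (fun N => dd V (N + 1)) := by
      rw [Asymptotics.isLittleO_iff]
      intro c hc
      have ih' := (Asymptotics.isLittleO_iff.1 ih) (half_pos hc)
      have h1 := hshift.eventually ih'
      have h2 := hr.eventually (ge_mem_nhds (show (0 : ℝ) < 1 / 2 by norm_num))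
      have h3 : Tendsto (fun N => (16 * 2 ^ k + 1) * C * (dd V (N + 1) / V (N + 1))) atTop
          (nhds 0) := by
        simpa using hr.const_mul ((16 * 2 ^ k + 1) * C)
      have h4 := h3.eventually (ge_mem_nhds (half_pos hc))
      filter_upwards [h1, h2, h4, eventually_ge_atTop 1] with N h1 h2 h4 hN
      rw [hdiff N hN]
      have hp' := hVpos (N + 1) (by omega)
      have hd := hdpos N
      have hs := SS_step x C hx V hVpos hVmono k N hN h2
      refine (norm_sub_le _ _).trans ?_
      rw [norm_smul, Real.norm_eq_abs, Real.norm_eq_abs, abs_of_pos (div_pos hd hp'),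
        abs_of_pos hd]
      rw [Real.norm_eq_abs, abs_of_pos hp'] at h1
      have a1 : dd V (N + 1) / V (N + 1) * ‖UU V x k (N + 1)‖ ≤ c / 2 * dd V (N + 1) := by
        calc _ ≤ dd V (N + 1) / V (N + 1) * (c / 2 * V (N + 1)) := by gcongr
          _ = _ := by field_simp
      have a2 := mul_le_mul_of_nonneg_right h4 hd.le
      linarith
    have hsumV : ∀ n, ∑ i ∈ Finset.range n, dd V (i + 1 + 1) = V (n + 1) - V 1 := by
      intro n
      rw [← Finset.sum_range_sub (fun i => V (i + 1))]
      exact Finset.sum_congr rfl fun i _ => dd_succ V (i + 1) (by omega)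
    have hV1 := hVtop.comp hshift
    have hs := (hlo.comp_tendsto hshift).sum_range (fun n => (hdpos (n + 1)).le) (by
      simp only [Function.comp_def, hsumV]
      exact tendsto_atTop_add_const_right _ _ hV1)
    simp only [Function.comp_def, hsumV] at hs
    have hcst : ∀ y : Y, (fun _ : ℕ => y) =o[atTop] fun N => V (N + 1) := by
      intro y
      apply Asymptotics.isLittleO_const_left.2
      right
      exact tendsto_norm_atTop_atTop.comp hV1
    have hbig : (fun n => V (n + 1) - V 1) =O[atTop] fun n => V (n + 1) := by
      apply Asymptotics.IsBigO.of_bound 1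
      filter_upwards with n
      have h1 := hVpos 1 le_rfl
      have h2 : V 1 ≤ V (n + 1) := by
        rcases Nat.eq_zero_or_pos n with h | h
        · simp [h]
        · exact (hVmono 1 (n + 1) le_rfl (by omega)).le
      rw [Real.norm_eq_abs, Real.norm_eq_abs, abs_of_nonneg (by linarith),
        abs_of_pos (by linarith)]
      linarith
    have hs2 := (hs.trans_isBigO hbig).add (hcst (UU V x (k + 1) 1))
    have hs3 : (fun N => UU V x (k + 1) (N + 1)) =o[atTop] fun N => V (N + 1) := by
      refine hs2.congr_left fun n => ?_
      rw [Finset.sum_range_sub (fun i => UU V x (k + 1) (i + 1))]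
      simp
    rw [Asymptotics.isLittleO_iff] at hs3 ⊢
    intro c hc
    obtain ⟨a, ha⟩ := eventually_atTop.1 (hs3 hc)
    refine eventually_atTop.2 ⟨a + 1, fun N hN => ?_⟩
    obtain ⟨M, rfl⟩ : ∃ M, N = M + 1 := ⟨N - 1, by omega⟩
    exact ha M (by omega)

/-- asymptotic formula for the iterated `V`-weighted averages:
`𝔼(k+1)^V_{n≤N} x_n = (1/(V(N)·k!)) Σ_{n=1}^N ΔV(n)·(log(V(N)/V(n)))^k·x_n + o(1)`. -/
theorem stmt7 {Y : Type*} [NormedAddCommGroup Y] [NormedSpace ℝ Y] [CompleteSpace Y]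
    (x : ℕ → Y) (hx : ∃ C : ℝ, ∀ n, ‖x n‖ ≤ C)
    (V : ℕ → ℝ)
    (hVpos : ∀ n : ℕ, 1 ≤ n → 0 < V n)
    (hVmono : ∀ m n : ℕ, 1 ≤ m → m < n → V m < V n)
    (hVtop : Tendsto V atTop atTop)
    (hV0 : Tendsto (fun N : ℕ => dd V N / V N) atTop (nhds 0))
    (k : ℕ) (hk : 1 ≤ k) :
    Tendsto (fun N : ℕ =>
      ‖iterAvg V x (k + 1) N -
        (V N * (Nat.factorial k : ℝ))⁻¹ • ∑ n ∈ Finset.Icc 1 N,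
          (dd V n * Real.log (V N / V n) ^ k) • x n‖) atTop (nhds 0) := by
  obtain ⟨C, hx⟩ := hx
  have h := UU_littleO x C hx V hVpos hVmono hVtop hV0 k
  have h2 := h.norm_norm.tendsto_div_nhds_zero
  refine h2.congr fun N => ?_
  have e : iterAvg V x (k + 1) N -
        (V N * (Nat.factorial k : ℝ))⁻¹ • ∑ n ∈ Finset.Icc 1 N,
          (dd V n * Real.log (V N / V n) ^ k) • x n = (V N)⁻¹ • UU V x k N := by
    unfold UU SS
    rw [iterAvg, smul_sub, mul_inv, mul_smul, Finset.smul_sum (r := ((k.factorial : ℝ))⁻¹)]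
    congr 2
    refine Finset.sum_congr rfl fun n _ => ?_
    rw [smul_smul]
    congr 1
    ring
  rw [e, norm_smul, norm_inv, div_eq_inv_mul]
end

section
/- Let Y be a Banach space and let (x_n)_{n∈ℕ} be a bounded sequence in Y. Let V : ℕ → (0,∞) be strictly increasing with lim_{N→∞} V(N) = ∞ and lim_{N→∞} ΔV(N)/V(N) = 0. If limsup_{N→∞} ‖Σ_{n=1}^N (ΔV(n)/V(n))·x_n‖ < ∞, then 𝔼(∞)^V x_n = 0. -/
open Filter Finset MeasureTheory

/-- The averaging operator. -/
noncomputable def avOp (Y : Type*) [NormedAddCommGroup Y] [NormedSpace ℝ Y] (V : ℕ → ℝ) :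
    Module.End ℝ (ℕ → Y) where
  toFun f N := (V N)⁻¹ • ∑ n ∈ Finset.Icc 1 N, dd V n • f n
  map_add' f g := by
    funext N
    simp [Finset.sum_add_distrib, smul_add]
  map_smul' c f := by
    funext N
    simp only [Pi.smul_apply, RingHom.id_apply]
    rw [smul_comm c, Finset.smul_sum (r := c)]
    congr 1
    exact Finset.sum_congr rfl fun n _ => smul_comm (dd V n) c (f n)

section
variable {Y : Type*} [NormedAddCommGroup Y] [NormedSpace ℝ Y] {V : ℕ → ℝ}

theorem avOp_apply (f : ℕ → Y) (N : ℕ) :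
    avOp Y V f N = (V N)⁻¹ • ∑ n ∈ Finset.Icc 1 N, dd V n • f n := rfl

theorem avOp_zero (f : ℕ → Y) : avOp Y V f 0 = 0 := by
  simp [avOp_apply]

theorem iterAvg_eq (f : ℕ → Y) (k : ℕ) : iterAvg V f k = (avOp Y V ^ k) f := by
  induction k with
  | zero => funext N; simp [iterAvg]
  | succ k ih =>
    funext N
    rw [pow_succ', Module.End.mul_apply, ← ih, avOp_apply, iterAvg]

theorem avOp_rec (hVpos : ∀ n : ℕ, 1 ≤ n → 0 < V n) (f : ℕ → Y) (n : ℕ) :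
    V (n+1) • avOp Y V f (n+1) =
      (V (n+1) - dd V (n+1)) • avOp Y V f n + dd V (n+1) • f (n+1) := by
  have h := hVpos (n+1) (by omega)
  rw [avOp_apply, smul_inv_smul₀ h.ne', Finset.sum_Icc_succ_top (by omega)]
  congr 1
  rcases Nat.eq_zero_or_pos n with rfl | hn
  · simp [avOp_apply]
  · have : V (n+1) - dd V (n+1) = V n := by
      simp [dd, hn.ne']
    rw [this, avOp_apply, smul_inv_smul₀ (hVpos n hn).ne']

theorem dd_facts (hVpos : ∀ n : ℕ, 1 ≤ n → 0 < V n)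
    (hVmono : ∀ m n : ℕ, 1 ≤ m → m < n → V m < V n) (n : ℕ) :
    0 < dd V (n+1) ∧ 0 ≤ V (n+1) - dd V (n+1) := by
  rcases Nat.eq_zero_or_pos n with rfl | hn
  · simpa [dd] using hVpos 1 le_rfl
  · have hdd : dd V (n+1) = V (n+1) - V n := by simp [dd, hn.ne']
    rw [hdd]
    have := hVmono n (n+1) hn (by omega)
    have := hVpos n hn
    constructor <;> linarith

theorem avOp_contr (hVpos : ∀ n : ℕ, 1 ≤ n → 0 < V n)
    (hVmono : ∀ m n : ℕ, 1 ≤ m → m < n → V m < V n) (f : ℕ → Y) (M : ℝ)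
    (hf : ∀ n, ‖f n‖ ≤ M) (n : ℕ) : ‖avOp Y V f n‖ ≤ M := by
  have hM : 0 ≤ M := (norm_nonneg _).trans (hf 1)
  induction n with
  | zero => rw [avOp_zero]; simpa
  | succ n ih =>
    obtain ⟨hd, hU⟩ := dd_facts hVpos hVmono n
    have h := hVpos (n+1) (by omega)
    have e := congrArg norm (avOp_rec hVpos f n)
    rw [norm_smul, Real.norm_of_nonneg h.le] at e
    have e2 := norm_add_le ((V (n+1) - dd V (n+1)) • avOp Y V f n) (dd V (n+1) • f (n+1))
    rw [norm_smul, norm_smul, Real.norm_of_nonneg hU, Real.norm_of_nonneg hd.le] at e2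
    have e3 := mul_le_mul_of_nonneg_left ih hU
    have e4 := mul_le_mul_of_nonneg_left (hf (n+1)) hd.le
    refine le_of_mul_le_mul_left ?_ h
    linarith

theorem avOp_contr2 (hVpos : ∀ n : ℕ, 1 ≤ n → 0 < V n)
    (hVmono : ∀ m n : ℕ, 1 ≤ m → m < n → V m < V n) (f : ℕ → Y) (M : ℝ)
    (hf : ∀ n, ‖((1 + avOp Y V) f) n‖ ≤ M) (n : ℕ) : 2 * ‖avOp Y V f n‖ ≤ M := by
  have hM : 0 ≤ M := (norm_nonneg _).trans (hf 1)
  induction n with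
  | zero => rw [avOp_zero]; simpa
  | succ n ih =>
    obtain ⟨hd, hU⟩ := dd_facts hVpos hVmono n
    have h := hVpos (n+1) (by omega)
    have e0 : (V (n+1) + dd V (n+1)) • avOp Y V f (n+1) = (V (n+1) - dd V (n+1)) • avOp Y V f n
        + dd V (n+1) • ((1 + avOp Y V) f) (n+1) := by
      rw [add_smul, avOp_rec hVpos f n]
      simp only [LinearMap.add_apply, Module.End.one_apply, Pi.add_apply, smul_add]
      abel
    have e := congrArg norm e0
    rw [norm_smul, Real.norm_of_nonneg (by linarith)] at e
    have e2 := norm_add_le ((V (n+1) - dd V (n+1)) • avOp Y V f n)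
      (dd V (n+1) • ((1 + avOp Y V) f) (n+1))
    rw [norm_smul, norm_smul, Real.norm_of_nonneg hU, Real.norm_of_nonneg hd.le] at e2
    have e3 := mul_le_mul_of_nonneg_left ih hU
    have e4 := mul_le_mul_of_nonneg_left (hf (n+1)) hd.le
    refine le_of_mul_le_mul_left (a := V (n+1) + dd V (n+1)) ?_ (by linarith)
    linarith

theorem avOp_pow_contr (hVpos : ∀ n : ℕ, 1 ≤ n → 0 < V n)
    (hVmono : ∀ m n : ℕ, 1 ≤ m → m < n → V m < V n) (f : ℕ → Y) (M : ℝ)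
    (hf : ∀ n, ‖f n‖ ≤ M) (k n : ℕ) : ‖(avOp Y V ^ k) f n‖ ≤ M := by
  induction k generalizing n with
  | zero => simpa using hf n
  | succ k ih =>
    rw [pow_succ', Module.End.mul_apply]
    exact avOp_contr hVpos hVmono _ M ih n

theorem avOp_pow_contr2 (hVpos : ∀ n : ℕ, 1 ≤ n → 0 < V n)
    (hVmono : ∀ m n : ℕ, 1 ≤ m → m < n → V m < V n) (k : ℕ) (f : ℕ → Y) (M : ℝ)
    (hf : ∀ n, ‖((1 + avOp Y V) ^ k) f n‖ ≤ M) (n : ℕ) :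
    2 ^ k * ‖(avOp Y V ^ k) f n‖ ≤ M := by
  induction k generalizing f n M with
  | zero => simpa using hf n
  | succ k ih =>
    have h1 : ∀ n, 2 ^ k * ‖(avOp Y V ^ k) ((1 + avOp Y V) f) n‖ ≤ M := by
      intro n
      refine ih _ M ?_ n
      intro n
      rw [← Module.End.mul_apply, ← pow_succ]
      exact hf n
    have hc : (avOp Y V ^ k) * (1 + avOp Y V) = (1 + avOp Y V) * (avOp Y V ^ k) := by
      rw [mul_add, add_mul, ← pow_succ, ← pow_succ', mul_one, one_mul]
    have h2 := avOp_contr2 hVpos hVmono ((avOp Y V ^ k) f) (M / 2 ^ k) (by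
      intro n
      rw [← Module.End.mul_apply, ← hc, Module.End.mul_apply, le_div_iff₀' (by positivity)]
      exact h1 n) n
    rw [pow_succ' (avOp Y V), Module.End.mul_apply]
    rw [le_div_iff₀' (by positivity)] at h2
    rw [pow_succ]
    linarith

theorem avOp_tendsto (hVpos : ∀ n : ℕ, 1 ≤ n → 0 < V n)
    (hVmono : ∀ m n : ℕ, 1 ≤ m → m < n → V m < V n)
    (hVtop : Tendsto V atTop atTop) (e : ℕ → Y) (he : Tendsto e atTop (nhds 0)) :
    Tendsto (avOp Y V e) atTop (nhds 0) := by
  have hsumR : ∀ N, ∑ i ∈ Finset.range N, dd V (i+1) = if N = 0 then 0 else V N := by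
    intro N
    induction N with
    | zero => simp
    | succ n ih =>
      rw [Finset.sum_range_succ, ih]
      rcases Nat.eq_zero_or_pos n with rfl | hn
      · simp [dd]
      · simp [dd, hn.ne']
  have hev : (fun N => ∑ i ∈ Finset.range N, dd V (i+1)) =ᶠ[atTop] V := by
    filter_upwards [eventually_ge_atTop 1] with N hN
    rw [hsumR, if_neg (by omega)]
  have hlo : (fun n => dd V (n+1) • e (n+1)) =o[atTop] (fun n => dd V (n+1)) := by
    have h1 : (fun n => e (n+1)) =o[atTop] (fun _ : ℕ => (1:ℝ)) := by
      rw [Asymptotics.isLittleO_one_iff]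
      exact he.comp (tendsto_add_atTop_nat 1)
    simpa using (Asymptotics.isBigO_refl (fun n => dd V (n+1)) atTop).smul_isLittleO h1
  have h := hlo.sum_range (fun n => (dd_facts hVpos hVmono n).1.le) (hVtop.congr' hev.symm)
  have h' := h.trans_eventuallyEq hev
  have h2 := h'.tendsto_inv_smul_nhds_zero
  refine h2.congr ?_
  intro N
  rw [avOp_apply]
  congr 1
  rw [Finset.range_eq_Ico, Finset.sum_Ico_add' (fun n => dd V n • e n) 0 N 1]
  rfl

theorem avOp_pow_tendsto (hVpos : ∀ n : ℕ, 1 ≤ n → 0 < V n)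
    (hVmono : ∀ m n : ℕ, 1 ≤ m → m < n → V m < V n)
    (hVtop : Tendsto V atTop atTop) (e : ℕ → Y) (he : Tendsto e atTop (nhds 0)) (k : ℕ) :
    Tendsto ((avOp Y V ^ k) e) atTop (nhds 0) := by
  induction k with
  | zero => simpa using he
  | succ k ih =>
    rw [pow_succ', Module.End.mul_apply]
    exact avOp_tendsto hVpos hVmono hVtop _ ih

theorem avOp_parts (hVpos : ∀ n : ℕ, 1 ≤ n → 0 < V n) (x : ℕ → Y) :
    avOp Y V x = (1 - avOp Y V) (fun N => ∑ n ∈ Finset.Icc 1 N, (dd V n / V n) • x n)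
      + avOp Y V (fun n => (dd V n / V n) • x n) := by
  set S : ℕ → Y := fun N => ∑ n ∈ Finset.Icc 1 N, (dd V n / V n) • x n with hS
  set e : ℕ → Y := fun n => (dd V n / V n) • x n with he
  have key : ∀ N, ∑ n ∈ Finset.Icc 1 N, dd V n • x n = V N • S N
      - ∑ n ∈ Finset.Icc 1 N, dd V n • S n + ∑ n ∈ Finset.Icc 1 N, dd V n • e n := by
    intro N
    induction N with
    | zero => simp [hS]
    | succ n ih =>
      have h := hVpos (n+1) (by omega)
      have hSs : S (n+1) = S n + e (n+1) := by
        simp only [hS, he]; rw [Finset.sum_Icc_succ_top (by omega)]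
      have hVe : V (n+1) • e (n+1) = dd V (n+1) • x (n+1) := by
        simp only [he]; rw [smul_smul, mul_div_cancel₀ _ h.ne']
      have hU : V n • S n = (V (n+1) - dd V (n+1)) • S n := by
        rcases Nat.eq_zero_or_pos n with rfl | hn
        · simp [hS]
        · simp [dd, hn.ne']
      rw [Finset.sum_Icc_succ_top (by omega), Finset.sum_Icc_succ_top (by omega),
        Finset.sum_Icc_succ_top (by omega), ih, hSs, hU, smul_add, hVe, sub_smul, smul_add]
      abel
  funext N
  simp only [Pi.add_apply, LinearMap.sub_apply, Module.End.one_apply, Pi.sub_apply]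
  rcases Nat.eq_zero_or_pos N with rfl | hN
  · simp [avOp_zero, hS]
  · rw [avOp_apply x, key, smul_add, smul_sub, inv_smul_smul₀ (hVpos N hN).ne']
    rfl

theorem binom_identity {R : Type*} [Ring R] [Algebra ℝ R] (a : R) (k : ℕ) :
    ((k:ℝ)+1) • ((1 + a)^k * (1 - a)) =
      ∑ j ∈ Finset.range (k+2), (((k+1).choose j : ℝ) * ((k:ℝ) + 1 - 2 * j)) • a ^ j := by
  have h1 : ∀ m : ℕ, (1 + a)^m = ∑ j ∈ Finset.range (m+1), ((m.choose j : ℝ)) • a^j := by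
    intro m
    rw [add_comm, (Commute.one_right a).add_pow]
    refine Finset.sum_congr rfl fun j _ => ?_
    rw [one_pow, mul_one, Nat.cast_smul_eq_nsmul, nsmul_eq_mul, Nat.cast_comm]
  have h2 : ((k:ℝ)+1) • ((1+a)^k * a) =
      ∑ j ∈ Finset.range (k+2), (((k+1).choose j : ℝ) * j) • a ^ j := by
    rw [Finset.sum_range_succ', h1, Finset.sum_mul, Finset.smul_sum]
    simp only [Nat.cast_zero, mul_zero, zero_smul, add_zero]
    refine Finset.sum_congr rfl fun j _ => ?_
    rw [smul_mul_assoc, ← pow_succ, smul_smul]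
    congr 1
    exact_mod_cast Nat.add_one_mul_choose_eq k j
  have h3 : ((k:ℝ)+1) • ((1 + a)^k * (1 - a)) =
      ((k:ℝ)+1) • (1+a)^(k+1) - (2:ℝ) • (((k:ℝ)+1) • ((1+a)^k * a)) := by
    rw [pow_succ, mul_sub, mul_add, mul_one, two_smul, smul_sub, smul_add]
    abel
  rw [h3, h2, h1, Finset.smul_sum, Finset.smul_sum, ← Finset.sum_sub_distrib]
  refine Finset.sum_congr rfl fun j _ => ?_
  rw [smul_smul, smul_smul, ← sub_smul]
  congr 1
  ring

theorem binom_bound (k : ℕ) :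
    ∑ j ∈ Finset.range (k+2), |((k+1).choose j : ℝ) * ((k:ℝ) + 1 - 2 * j)|
      ≤ 2^(k+1) * Real.sqrt ((k:ℝ)+1) := by
  have hvar : ∑ j ∈ Finset.range (k+2), ((k+1).choose j : ℝ) * ((k:ℝ) + 1 - 2 * j)^2
      = 2^(k+1) * ((k:ℝ)+1) := by
    have h := congrArg (Polynomial.eval (1/2 : ℝ)) (bernsteinPolynomial.variance ℝ (k+1))
    simp only [bernsteinPolynomial, Polynomial.eval_finsetSum, nsmul_eq_mul,
      Polynomial.eval_mul, Polynomial.eval_pow, Polynomial.eval_sub,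
      Polynomial.eval_natCast, Polynomial.eval_X, Polynomial.eval_one] at h
    have h4 := congrArg (fun t : ℝ => 4 * 2^(k+1) * t) h
    simp only [Finset.mul_sum] at h4
    have hr : 4 * 2^(k+1) * (((k+1 : ℕ) : ℝ) * (1/2) * (1 - 1/2)) = 2^(k+1) * ((k:ℝ)+1) := by
      push_cast
      ring
    rw [hr] at h4
    rw [← h4]
    refine Finset.sum_congr rfl fun j hj => ?_
    have hj' : j ≤ k + 1 := by
      have := Finset.mem_range.1 hj
      omega
    have hp : (2:ℝ)^(k+1) * ((1/2)^j * (1 - 1/2)^(k+1-j)) = 1 := by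
      rw [show (1 - 1/2 : ℝ) = 1/2 by norm_num, ← pow_add, Nat.add_sub_cancel' hj', ← mul_pow]
      norm_num
    push_cast
    linear_combination (-((k+1).choose j : ℝ) * ((k:ℝ) + 1 - 2 * j)^2) * hp
  have hsum : ∑ j ∈ Finset.range (k+2), ((k+1).choose j : ℝ) = 2^(k+1) := by
    exact_mod_cast Nat.sum_range_choose (k+1)
  have hcs := Finset.sum_mul_sq_le_sq_mul_sq (Finset.range (k+2))
    (fun j => Real.sqrt ((k+1).choose j)) (fun j => Real.sqrt ((k+1).choose j) * |(k:ℝ) + 1 - 2 * j|)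
  have t1 : ∀ j : ℕ, Real.sqrt ((k+1).choose j) * (Real.sqrt ((k+1).choose j) *
      |(k:ℝ) + 1 - 2 * j|) = |((k+1).choose j : ℝ) * ((k:ℝ) + 1 - 2 * j)| := by
    intro j
    rw [← mul_assoc, Real.mul_self_sqrt (by positivity), abs_mul, Nat.abs_cast]
  simp only [t1, mul_pow, sq_abs, Real.sq_sqrt (Nat.cast_nonneg _), hvar, hsum] at hcs
  refine (abs_le_of_sq_le_sq' (a := ∑ j ∈ Finset.range (k+2),
    |((k+1).choose j : ℝ) * ((k:ℝ) + 1 - 2 * j)|) ?_ (by positivity)).2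
  rw [mul_pow, Real.sq_sqrt (by positivity)]
  linarith

theorem main_bound (hVpos : ∀ n : ℕ, 1 ≤ n → 0 < V n)
    (hVmono : ∀ m n : ℕ, 1 ≤ m → m < n → V m < V n) (S : ℕ → Y) (B : ℝ)
    (hS : ∀ n, ‖S n‖ ≤ B) (k n : ℕ) :
    ‖(avOp Y V ^ k) ((1 - avOp Y V) S) n‖ ≤ 2 * B / Real.sqrt (k+1) := by
  have hB : 0 ≤ B := (norm_nonneg _).trans (hS 1)
  have hk : (0:ℝ) < k + 1 := by positivity
  have h := avOp_pow_contr2 hVpos hVmono k ((1 - avOp Y V) S)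
    (2^(k+1) * Real.sqrt (k+1) * B / (k+1)) (by
      intro n
      rw [← Module.End.mul_apply, le_div_iff₀' hk]
      have e := congrArg (fun T : Module.End ℝ (ℕ → Y) => ‖T S n‖) (binom_identity (avOp Y V) k)
      simp only [LinearMap.smul_apply, Pi.smul_apply, norm_smul, Real.norm_of_nonneg hk.le,
        LinearMap.sum_apply, Finset.sum_apply] at e
      rw [e]
      refine (norm_sum_le _ _).trans ?_
      refine le_trans ?_ (mul_le_mul_of_nonneg_right (binom_bound k) hB)
      rw [Finset.sum_mul]
      refine Finset.sum_le_sum fun j _ => ?_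
      rw [norm_smul, Real.norm_eq_abs]
      exact mul_le_mul_of_nonneg_left (avOp_pow_contr hVpos hVmono S B hS j n) (abs_nonneg _)) n
  have hsq : Real.sqrt (k+1) * Real.sqrt (k+1) = k + 1 := Real.mul_self_sqrt hk.le
  have hs : 0 < Real.sqrt ((k:ℝ)+1) := Real.sqrt_pos.2 hk
  refine le_of_mul_le_mul_left (h.trans (le_of_eq ?_)) (by positivity : (0:ℝ) < 2^k)
  rw [mul_div_assoc', div_eq_div_iff hk.ne' hs.ne', ← hsq]
  rw [show Real.sqrt (Real.sqrt ((k:ℝ)+1) * Real.sqrt ((k:ℝ)+1)) = Real.sqrt ((k:ℝ)+1) by rw [hsq]]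
  ring

end

/-- if the partial sums `Σ_{n=1}^N (ΔV(n)/V(n))·x_n` have bounded norm
(i.e. their limsup is finite), then `𝔼(∞)^V x_n = 0`. -/
theorem stmt8 {Y : Type*} [NormedAddCommGroup Y] [NormedSpace ℝ Y] [CompleteSpace Y]
    (x : ℕ → Y) (hx : ∃ C : ℝ, ∀ n, ‖x n‖ ≤ C)
    (V : ℕ → ℝ)
    (hVpos : ∀ n : ℕ, 1 ≤ n → 0 < V n)
    (hVmono : ∀ m n : ℕ, 1 ≤ m → m < n → V m < V n)
    (hVtop : Tendsto V atTop atTop)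
    (hV0 : Tendsto (fun N : ℕ => dd V N / V N) atTop (nhds 0))
    (hbd : Filter.IsBoundedUnder (· ≤ ·) atTop
      (fun N : ℕ => ‖∑ n ∈ Finset.Icc 1 N, (dd V n / V n) • x n‖)) :
    iterInfty V x 0 := by
  obtain ⟨C, hC⟩ := hx
  obtain ⟨B, hB⟩ := hbd.bddAbove_range
  set S : ℕ → Y := fun N => ∑ n ∈ Finset.Icc 1 N, (dd V n / V n) • x n with hS
  have hSB : ∀ n, ‖S n‖ ≤ B := fun n => hB ⟨n, rfl⟩
  set e : ℕ → Y := fun n => (dd V n / V n) • x n with he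
  have he0 : Tendsto e atTop (nhds 0) := by
    refine squeeze_zero_norm (a := fun n => |dd V n / V n| * C) ?_ ?_
    · intro n
      rw [he, norm_smul, Real.norm_eq_abs]
      exact mul_le_mul_of_nonneg_left (hC n) (abs_nonneg _)
    · simpa using hV0.abs.mul_const C
  have hcl : Tendsto (fun k : ℕ => 2 * B / Real.sqrt (k+1)) atTop (nhds 0) := by
    refine Tendsto.div_atTop tendsto_const_nhds ?_
    exact Real.tendsto_sqrt_atTop.comp
      (tendsto_atTop_add_const_right _ _ tendsto_natCast_atTop_atTop)
  unfold iterInfty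
  have hbound : ∀ k N, ‖iterAvg V (fun n => x n - 0) (k+1) N‖ ≤ C := by
    intro k N
    rw [iterAvg_eq]
    exact avOp_pow_contr hVpos hVmono _ C (by simpa using hC) _ _
  refine squeeze_zero ?_ ?_ hcl
  · intro k
    exact le_limsup_of_frequently_le (Frequently.of_forall fun N => norm_nonneg _)
      ⟨C, eventually_map.2 (Eventually.of_forall fun N => hbound k N)⟩
  · intro k
    have hdec : ∀ N, ‖iterAvg V (fun n => x n - 0) (k+1) N‖ ≤
        2 * B / Real.sqrt (k+1) + ‖(avOp Y V ^ (k+1)) e N‖ := by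
      intro N
      rw [iterAvg_eq]
      simp only [sub_zero]
      have : (avOp Y V ^ (k+1)) x = (avOp Y V ^ k) ((1 - avOp Y V) S)
          + (avOp Y V ^ (k+1)) e := by
        rw [pow_succ, Module.End.mul_apply, avOp_parts hVpos x, map_add]
        rfl
      rw [this, Pi.add_apply]
      exact (norm_add_le _ _).trans
        (add_le_add_left (main_bound hVpos hVmono S B hSB k N) _)
    have ht : Tendsto (fun N => 2 * B / Real.sqrt (k+1) + ‖(avOp Y V ^ (k+1)) e N‖) atTop
        (nhds (2 * B / Real.sqrt (k+1))) := by
      simpa using (avOp_pow_tendsto hVpos hVmono hVtop e he0 (k+1)).norm.const_add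
        (2 * B / Real.sqrt ((k:ℝ)+1))
    rw [← ht.limsup_eq]
    refine limsup_le_limsup (Eventually.of_forall hdec) ?_ ht.isBoundedUnder_le
    exact isCoboundedUnder_le_of_le atTop (x := 0) fun N => norm_nonneg _
end
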